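/- Let r ≥ 4 be an integer with r ≡ 0 (mod 4), and let c₁, c₂, c₃ > 0. There exists λ₀ > 0, depending only on r, c₁, c₂, c₃, with the following property. Let V be a finite-dimensional real inner product space, L : V → V a semi-negative linear map, P : V → V an orthogonal projection, h > 0, τ > 0, and λ = τ/h ≤ λ₀, such that for all w, v ∈ V: ‖P L w‖ ≤ c₁ h^{−1/2} |w|_Γ, ‖P L* w‖ ≤ c₁ h^{−1/2} |w|_Γ, |v|_Γ ≤ c₂ h^{−1/2} ‖v‖, and ‖L v‖ ≤ c₃ h^{−1} ‖v‖. Set L̃ = (I − P)L and R̃ = I + τ L Σ_{i=1}^r (1/i!) (τ L̃)^{i−1}. Then ‖R̃^m w‖ ≤ ‖w‖ for all w ∈ V and every integer m ≥ 2. -/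

import Mathlib

open RealInnerProductSpace

/-- The jump seminorm `|v|_Γ = (-⟪(L + L*)v, v⟫)^{1/2}` associated with a
semi-negative operator `L` with adjoint `L*`. -/
noncomputable def jumpSN {V : Type*} [NormedAddCommGroup V] [InnerProductSpace ℝ V]
    (L Lstar : V →ₗ[ℝ] V) (v : V) : ℝ :=
  Real.sqrt (-⟪(L + Lstar) v, v⟫)

/-!
Put `A = τL` and `r = 2k`, so that `k` is even. The curve `w + A ∑ i ∈ [1, r], tⁱ/i! (τL̃)ⁱ⁻¹ w`
joins `w` to `R̃w` and differs from the Taylor polynomial `∑ i ≤ r, tⁱ/i! (τL̃)ⁱ w` only by a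
vector in the range of `P`, which is of size `O(√λ)`. Differentiating its energy shows that one
step dissipates the integral over `[0, 1]` of `τ |∑ i ≤ k, tⁱ/i! (τL̃)ⁱ w|_Γ²`, up to pairings of
the last stage `2k` with the earlier ones. By skew-symmetry modulo jumps these move to the
diagonal: stage `1` produces the jump of stage `k` with coefficient `1/(2k+1)!`, stage `2` damps
stage `k + 1` because `k` is even, and everything else is `O(√λ)`.

After `m` steps the dissipation is the integral over `[0, m]`, and the production has coefficient
`m/(2k+1)!`. Testing with the Legendre polynomial of degree `k` on `[0, m]` shows that for `m ≥ 2`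
the integral dominates the production, with a margin that absorbs the `O(√λ)` terms. How small `λ`
must be depends on `m`, but two and three steps generate all `m ≥ 2`.
-/

open scoped Nat

universe u v

section TaylorSum

open Finset

variable {E F : Type*} [AddCommGroup E] [Module ℝ E] [AddCommGroup F] [Module ℝ F]

/-- The Taylor polynomial with `n` terms whose derivatives at `0` are `x 0, x 1, …`. -/
noncomputable def taylorSum (n : ℕ) (x : ℕ → E) (t : ℝ) : E :=
  ∑ i ∈ range n, (t ^ i / i !) • x i

/-- The primitive of `taylorSum n x` that vanishes at `0`. The summation range `1 ≤ i ≤ n` is the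
one in the definition of the sdA-RK step operator. -/
noncomputable def taylorPrimitive (n : ℕ) (x : ℕ → E) (t : ℝ) : E :=
  ∑ i ∈ Icc 1 n, (t ^ i / i !) • x (i - 1)

lemma map_taylorSum (f : E →ₗ[ℝ] F) (n : ℕ) (x : ℕ → E) (t : ℝ) :
    f (taylorSum n x t) = taylorSum n (f ∘ x) t := by
  simp [taylorSum]

lemma map_taylorPrimitive (f : E →ₗ[ℝ] F) (n : ℕ) (x : ℕ → E) (t : ℝ) :
    f (taylorPrimitive n x t) = taylorPrimitive n (f ∘ x) t := by
  simp [taylorPrimitive]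

lemma taylorPrimitive_eq_sum_range (n : ℕ) (x : ℕ → E) (t : ℝ) :
    taylorPrimitive n x t = ∑ i ∈ range n, (t ^ (i + 1) / (i + 1)!) • x i := by
  rw [taylorPrimitive, ← Ico_add_one_right_eq_Icc, sum_Ico_eq_sum_range]
  simp [add_comm 1]

lemma taylorPrimitive_zero_right (n : ℕ) (x : ℕ → E) : taylorPrimitive n x 0 = 0 := by
  simp [taylorPrimitive_eq_sum_range]

lemma taylorSum_succ (n : ℕ) (x : ℕ → E) (t : ℝ) :
    taylorSum (n + 1) x t = taylorSum n x t + (t ^ n / n !) • x n :=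
  sum_range_succ _ _

lemma taylorSum_succ' (n : ℕ) (x : ℕ → E) (t : ℝ) :
    taylorSum (n + 1) x t = x 0 + taylorPrimitive n (fun i => x (i + 1)) t := by
  simp [taylorSum, sum_range_succ', taylorPrimitive_eq_sum_range, add_comm]

lemma taylorSum_sub_taylorSum {n p : ℕ} (h : n ≤ p) (x : ℕ → E) (t : ℝ) :
    taylorSum p x t - taylorSum n x t = ∑ i ∈ Ico n p, (t ^ i / i !) • x i :=
  (sum_Ico_eq_sub _ h).symm

lemma add_pow_div_factorial (s t : ℝ) (n : ℕ) :
    (s + t) ^ n / n ! = ∑ i ∈ range (n + 1), s ^ i / i ! * (t ^ (n - i) / (n - i)!) := by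
  rw [add_pow, sum_div]
  refine sum_congr rfl fun i hi => ?_
  rw [Nat.cast_choose ℝ (mem_range_succ_iff.mp hi)]
  field_simp

lemma taylorSum_add (n : ℕ) (x : ℕ → E) (s t : ℝ) :
    taylorSum n x (s + t) =
      taylorSum n (fun j => taylorSum (n - j) (fun i => x (i + j)) t) s := by
  simp only [taylorSum, add_pow_div_factorial, sum_smul, smul_sum, smul_smul]
  rw [← sum_range_diag_flip n fun j i => (s ^ j / j ! * (t ^ i / i !)) • x (i + j)]
  refine sum_congr rfl fun l _ => sum_congr rfl fun j hj => ?_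
  rw [Nat.sub_add_cancel (mem_range_succ_iff.mp hj)]

@[fun_prop]
lemma continuous_taylorSum [TopologicalSpace E] [IsTopologicalAddGroup E] [ContinuousSMul ℝ E]
    (n : ℕ) (x : ℕ → E) : Continuous (taylorSum n x) := by
  unfold taylorSum
  fun_prop

end TaylorSum

section TaylorEstimates

open Finset

lemma sum_pow_div_factorial_le_exp {t : ℝ} (ht : 0 ≤ t) (s : Finset ℕ) :
    ∑ i ∈ s, t ^ i / i ! ≤ Real.exp t := by
  rw [Real.exp_eq_exp_ℝ]
  exact sum_le_hasSum s (fun i _ => by positivity) (NormedSpace.expSeries_div_hasSum_exp t)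

variable {E : Type*} [SeminormedAddCommGroup E] [NormedSpace ℝ E]

lemma norm_sum_pow_div_factorial_smul_le {t B : ℝ} (ht : 0 ≤ t) (hB : 0 ≤ B) {s : Finset ℕ}
    {x : ℕ → E} (hx : ∀ i ∈ s, ‖x i‖ ≤ B) :
    ‖∑ i ∈ s, (t ^ i / i !) • x i‖ ≤ Real.exp t * B :=
  calc ‖∑ i ∈ s, (t ^ i / i !) • x i‖ ≤ ∑ i ∈ s, t ^ i / i ! * B := by
        refine norm_sum_le_of_le s fun i hi => ?_
        rw [norm_smul, Real.norm_of_nonneg (by positivity)]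
        exact mul_le_mul_of_nonneg_left (hx i hi) (by positivity)
    _ ≤ Real.exp t * B := by
        rw [← sum_mul]
        exact mul_le_mul_of_nonneg_right (sum_pow_div_factorial_le_exp ht s) hB

lemma norm_taylorSum_le {t B : ℝ} (ht : 0 ≤ t) (hB : 0 ≤ B) {n : ℕ} {x : ℕ → E}
    (hx : ∀ i < n, ‖x i‖ ≤ B) : ‖taylorSum n x t‖ ≤ Real.exp t * B :=
  norm_sum_pow_div_factorial_smul_le ht hB fun i hi => hx i (mem_range.mp hi)

lemma norm_taylorPrimitive_le {t B : ℝ} (ht : 0 ≤ t) (hB : 0 ≤ B) {n : ℕ} {x : ℕ → E}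
    (hx : ∀ i < n, ‖x i‖ ≤ B) : ‖taylorPrimitive n x t‖ ≤ Real.exp t * B :=
  norm_sum_pow_div_factorial_smul_le ht hB fun i hi =>
    hx (i - 1) (by have := mem_Icc.mp hi; omega)

lemma pow_div_factorial_le_one {t : ℝ} (h0 : 0 ≤ t) (h1 : t ≤ 1) (n : ℕ) : t ^ n / n ! ≤ 1 :=
  div_le_one_of_le₀ ((pow_le_one₀ h0 h1).trans (mod_cast n.factorial_pos)) (by positivity)

lemma hasDerivAt_taylorPrimitive {E : Type*} [NormedAddCommGroup E] [NormedSpace ℝ E]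
    (n : ℕ) (x : ℕ → E) (t : ℝ) :
    HasDerivAt (taylorPrimitive n x) (taylorSum n x t) t := by
  rw [funext (taylorPrimitive_eq_sum_range n x)]
  refine HasDerivAt.fun_sum fun i _ => HasDerivAt.smul_const ?_ (x i)
  convert (hasDerivAt_pow (i + 1) t).div_const ((i + 1)! : ℝ) using 1
  rw [Nat.factorial_succ]
  push_cast
  field_simp

end TaylorEstimates

section Legendre

open Polynomial

lemma integral_mul_iterate_derivative {a b : ℝ} {W : ℝ[X]} {k : ℕ}
    (ha : ∀ j < k, (derivative^[j] W).eval a = 0) (hb : ∀ j < k, (derivative^[j] W).eval b = 0)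
    (p : ℝ[X]) :
    ∫ t in a..b, p.eval t * (derivative^[k] W).eval t =
      (-1) ^ k * ∫ t in a..b, (derivative^[k] p).eval t * W.eval t := by
  induction k generalizing p with
  | zero => simp
  | succ k ih =>
    have parts := intervalIntegral.integral_mul_deriv_eq_deriv_mul (a := a) (b := b)
      (fun t _ => p.hasDerivAt t) (fun t _ => (derivative^[k] W).hasDerivAt t)
      (p.derivative.continuous.intervalIntegrable _ _)
      ((derivative (derivative^[k] W)).continuous.intervalIntegrable _ _)
    rw [Function.iterate_succ_apply' derivative k W, Function.iterate_succ_apply derivative k p,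
      parts, ih (fun j hj => ha j (by omega)) (fun j hj => hb j (by omega)),
      ha k (by omega), hb k (by omega)]
    ring

lemma iterate_derivative_eq_C_of_natDegree_le {R : Type*} [Semiring R] {p : R[X]} {k : ℕ}
    (hp : p.natDegree ≤ k) : derivative^[k] p = C (k ! * p.coeff k) := by
  ext n
  rcases n.eq_zero_or_pos with rfl | hn
  · simp [coeff_iterate_derivative, Nat.descFactorial_self]
  · rw [coeff_iterate_derivative, coeff_eq_zero_of_natDegree_lt (by omega), smul_zero,
      coeff_C_of_ne_zero hn.ne']

/-- The Legendre polynomial of degree `k` on the interval `[0, m]`, up to normalisation, in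
Rodrigues' form. -/
noncomputable def legendreOn (m : ℝ) (k : ℕ) : ℝ[X] :=
  derivative^[k] ((X * (C m - X)) ^ k)

/-- The integral of Rodrigues' weight `(t (m - t)) ^ k` over `[0, m]`. -/
noncomputable def legendreWeight (m : ℝ) (k : ℕ) : ℝ :=
  ∫ t in (0 : ℝ)..m, (t * (m - t)) ^ k

lemma integral_mul_legendreOn (m : ℝ) (k : ℕ) (p : ℝ[X]) :
    ∫ t in (0 : ℝ)..m, p.eval t * (legendreOn m k).eval t =
      (-1) ^ k * ∫ t in (0 : ℝ)..m, (derivative^[k] p).eval t * (t * (m - t)) ^ k := by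
  have boundary : ∀ x : ℝ, x * (m - x) = 0 → ∀ j < k,
      (derivative^[j] ((X * (C m - X)) ^ k)).eval x = 0 := fun x hx j hj =>
    eval_eq_zero_of_dvd_of_eval_eq_zero (pow_sub_dvd_iterate_derivative_pow _ k j)
      (by simp [hx, show k - j ≠ 0 by omega])
  rw [legendreOn, integral_mul_iterate_derivative (boundary 0 (by simp)) (boundary m (by simp))]
  simp

lemma integral_mul_legendreOn_of_natDegree_le (m : ℝ) {k : ℕ} {p : ℝ[X]} (hp : p.natDegree ≤ k) :
    ∫ t in (0 : ℝ)..m, p.eval t * (legendreOn m k).eval t =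
      (-1) ^ k * (k ! * p.coeff k) * legendreWeight m k := by
  rw [integral_mul_legendreOn, iterate_derivative_eq_C_of_natDegree_le hp]
  simp only [eval_C, intervalIntegral.integral_const_mul]
  rw [legendreWeight]
  ring

lemma integral_legendreOn_mul_self (m : ℝ) (k : ℕ) :
    ∫ t in (0 : ℝ)..m, (legendreOn m k).eval t * (legendreOn m k).eval t =
      (2 * k)! * legendreWeight m k := by
  have hdeg : (X * (C m - X) : ℝ[X]).natDegree ≤ 2 := by compute_degree
  have hcoeff : (X * (C m - X) : ℝ[X]).coeff 2 = -1 := by simp [coeff_X_mul _ 1]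
  have hpow : ((X * (C m - X)) ^ k : ℝ[X]).natDegree ≤ 2 * k :=
    natDegree_pow_le.trans (by rw [mul_comm]; gcongr)
  have hlead : ((X * (C m - X)) ^ k : ℝ[X]).coeff (2 * k) = (-1) ^ k := by
    rw [mul_comm 2 k, coeff_pow_of_natDegree_le hdeg, hcoeff]
  rw [integral_mul_legendreOn, legendreOn, ← Function.iterate_add_apply, ← two_mul,
    iterate_derivative_eq_C_of_natDegree_le hpow, hlead]
  simp only [eval_C, intervalIntegral.integral_const_mul]
  rw [legendreWeight, ← mul_assoc, mul_left_comm, ← mul_pow]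
  simp

lemma exists_polynomial_eval_eq_taylorSum (k : ℕ) (a : ℕ → ℝ) : ∃ p : ℝ[X],
    p.natDegree ≤ k ∧ k ! * p.coeff k = a k ∧ ∀ t, p.eval t = taylorSum (k + 1) a t := by
  refine ⟨∑ i ∈ Finset.range (k + 1), C (a i / i !) * X ^ i, ?_, ?_, fun t => ?_⟩
  · refine natDegree_sum_le_of_forall_le _ _ fun i hi => ?_
    exact (natDegree_C_mul_X_pow_le _ _).trans (Finset.mem_range_succ_iff.mp hi)
  · simp [finsetSum_coeff, coeff_X_pow, mul_div_cancel₀, Nat.factorial_ne_zero]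
  · simp only [eval_finsetSum, taylorSum, eval_mul, eval_C, eval_pow, eval_X, smul_eq_mul]
    exact Finset.sum_congr rfl fun i _ => by ring

lemma integral_taylorSum_mul_legendreOn (m : ℝ) (k : ℕ) (a : ℕ → ℝ) :
    ∫ t in (0 : ℝ)..m, taylorSum (k + 1) a t * (legendreOn m k).eval t =
      (-1) ^ k * a k * legendreWeight m k := by
  obtain ⟨p, hdeg, hcoeff, heval⟩ := exists_polynomial_eval_eq_taylorSum k a
  rw [← hcoeff, ← integral_mul_legendreOn_of_natDegree_le m hdeg]
  simp only [heval]

lemma div_lt_legendreWeight {m : ℝ} (hm : 2 ≤ m) {k : ℕ} (hk : k ≠ 0) :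
    m / (2 * k + 1) < legendreWeight m k := by
  have integrable (a b : ℝ) : IntervalIntegrable (fun t => (t * (m - t)) ^ k)
      MeasureTheory.volume a b := Continuous.intervalIntegrable (by fun_prop) _ _
  have symmetric : ∫ t in (m / 2)..m, (t * (m - t)) ^ k =
      ∫ t in (0 : ℝ)..(m / 2), (t * (m - t)) ^ k := by
    have := intervalIntegral.integral_comp_sub_left (fun t => (t * (m - t)) ^ k) m
      (a := m / 2) (b := m)
    rw [sub_self, sub_half] at this
    rw [← this]
    exact intervalIntegral.integral_congr fun t _ => by simp [mul_comm]
  have half : ∫ t in (0 : ℝ)..(m / 2), t ^ (2 * k) <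
      ∫ t in (0 : ℝ)..(m / 2), (t * (m - t)) ^ k := by
    refine intervalIntegral.integral_lt_integral_of_continuousOn_of_le_of_exists_lt (by linarith)
      (by fun_prop) (by fun_prop) (fun t ht => ?_) ⟨m / 4, ⟨by linarith, by linarith⟩, ?_⟩ <;>
      rw [pow_mul]
    · exact pow_le_pow_left₀ (by positivity) (by nlinarith [ht.1, ht.2]) k
    · exact pow_lt_pow_left₀ (by nlinarith) (by positivity) hk
  have pow_half : m / 2 ≤ (m / 2) ^ (2 * k + 1) := le_self_pow₀ (by linarith) (by omega)
  rw [legendreWeight, ← intervalIntegral.integral_add_adjacent_intervals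
    (integrable 0 (m / 2)) (integrable (m / 2) m), symmetric]
  calc m / (2 * k + 1) = 2 * ((m / 2) / (2 * k + 1)) := by ring
    _ ≤ 2 * ∫ t in (0 : ℝ)..(m / 2), t ^ (2 * k) := by
      rw [integral_pow, zero_pow (by omega), sub_zero]
      push_cast
      gcongr
    _ < _ := by linarith

lemma legendreWeight_pos {m : ℝ} (hm : 2 ≤ m) {k : ℕ} (hk : k ≠ 0) : 0 < legendreWeight m k :=
  (div_nonneg (by linarith) (by positivity)).trans_lt (div_lt_legendreWeight hm hk)

end Legendre

section Coercivity

open Finset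

lemma norm_sq_le_two_mul_norm_add_sq {E : Type*} [SeminormedAddCommGroup E] (a b : E) :
    ‖a‖ ^ 2 ≤ 2 * ‖a + b‖ ^ 2 + 2 * ‖b‖ ^ 2 := by
  have triangle : ‖a‖ ≤ ‖a + b‖ + ‖b‖ := norm_le_add_norm_add a b
  nlinarith [norm_nonneg a, sq_nonneg (‖a + b‖ - ‖b‖)]

lemma norm_sq_le_norm_sq_add {E : Type*} [SeminormedAddCommGroup E] {x y : E} {B ε : ℝ}
    (hy : ‖y‖ ≤ B) (hxy : ‖x - y‖ ≤ ε) : ‖y‖ ^ 2 ≤ ‖x‖ ^ 2 + 2 * (B * ε) := by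
  have triangle : ‖y‖ ≤ ‖x‖ + ‖x - y‖ := by
    simpa using norm_sub_le x (x - y)
  have bound : ‖y‖ * ‖x - y‖ ≤ B * ε :=
    mul_le_mul hy hxy (norm_nonneg _) ((norm_nonneg y).trans hy)
  rcases le_total ‖y‖ ‖x - y‖ with h | h <;>
    nlinarith [norm_nonneg x, norm_nonneg y, norm_nonneg (x - y)]

lemma norm_sq_mul_legendreWeight_le_integral {E : Type*} [SeminormedAddCommGroup E]
    [InnerProductSpace ℝ E] {m : ℝ} (hm : 0 ≤ m) (k : ℕ) (x : ℕ → E) :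
    ‖x k‖ ^ 2 / (2 * k)! * legendreWeight m k ≤
      ∫ t in (0 : ℝ)..m, ‖taylorSum (k + 1) x t‖ ^ 2 := by
  set s : ℝ := (-1) ^ k / (2 * k)!
  set G : ℝ → ℝ := fun t => (legendreOn m k).eval t
  have hG : Continuous G := (legendreOn m k).continuous
  have sq_sign : ((-1 : ℝ) ^ k) ^ 2 = 1 := by rw [pow_right_comm]; simp
  -- With this `s`, `(s * G t) • x k` is the component of `taylorSum (k + 1) x` along the Legendre
  -- polynomial `G`, so integrating the next bound is Bessel's inequality.
  have nonneg_sq (t : ℝ) :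
      2 * s * (taylorSum (k + 1) (fun i => ⟪x k, x i⟫) t * G t) -
        s ^ 2 * ‖x k‖ ^ 2 * (G t * G t) ≤ ‖taylorSum (k + 1) x t‖ ^ 2 := by
    have inner_sum : ⟪x k, taylorSum (k + 1) x t⟫ =
        taylorSum (k + 1) (fun i => ⟪x k, x i⟫) t :=
      map_taylorSum (innerₛₗ ℝ (x k)) (k + 1) x t
    have := sq_nonneg ‖taylorSum (k + 1) x t - (s * G t) • x k‖
    rw [norm_sub_sq_real, inner_smul_right, real_inner_comm, inner_sum, norm_smul, mul_pow,
      Real.norm_eq_abs, sq_abs] at this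
    linarith
  calc ‖x k‖ ^ 2 / (2 * k)! * legendreWeight m k
      = 2 * s * ((-1) ^ k * ⟪x k, x k⟫ * legendreWeight m k) -
          s ^ 2 * ‖x k‖ ^ 2 * ((2 * k)! * legendreWeight m k) := by
        rw [real_inner_self_eq_norm_sq]
        simp only [s]
        field_simp
        linear_combination -‖x k‖ ^ 2 * legendreWeight m k * sq_sign
    _ = ∫ t in (0 : ℝ)..m, (2 * s * (taylorSum (k + 1) (fun i => ⟪x k, x i⟫) t * G t) -
          s ^ 2 * ‖x k‖ ^ 2 * (G t * G t)) := by
        rw [intervalIntegral.integral_sub (Continuous.intervalIntegrable (by fun_prop) _ _)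
          (Continuous.intervalIntegrable (by fun_prop) _ _), intervalIntegral.integral_const_mul,
          intervalIntegral.integral_const_mul, integral_taylorSum_mul_legendreOn,
          integral_legendreOn_mul_self]
    _ ≤ ∫ t in (0 : ℝ)..m, ‖taylorSum (k + 1) x t‖ ^ 2 :=
        intervalIntegral.integral_mono_on hm (Continuous.intervalIntegrable (by fun_prop) _ _)
          (Continuous.intervalIntegrable (by fun_prop) _ _) fun t _ => nonneg_sq t

lemma integral_norm_taylorSum_sq_le {E : Type*} [SeminormedAddCommGroup E] [NormedSpace ℝ E]
    {m : ℝ} (hm : 0 ≤ m) (n : ℕ) (x : ℕ → E) :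
    ∫ t in (0 : ℝ)..m, ‖taylorSum n x t‖ ^ 2 ≤
      2 * (∫ t in (0 : ℝ)..m, ‖taylorSum (n + 1) x t‖ ^ 2) +
        2 * ((∫ t in (0 : ℝ)..m, (t ^ n / n !) ^ 2) * ‖x n‖ ^ 2) := by
  rw [← intervalIntegral.integral_mul_const, ← intervalIntegral.integral_const_mul,
    ← intervalIntegral.integral_const_mul, ← intervalIntegral.integral_add
      (Continuous.intervalIntegrable (by fun_prop) _ _)
      (Continuous.intervalIntegrable (by fun_prop) _ _)]
  refine intervalIntegral.integral_mono_on hm (Continuous.intervalIntegrable (by fun_prop) _ _)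
    (Continuous.intervalIntegrable (by fun_prop) _ _) fun t _ => ?_
  have split := norm_sq_le_two_mul_norm_add_sq (taylorSum n x t) ((t ^ n / n !) • x n)
  rwa [← taylorSum_succ, norm_smul, mul_pow, Real.norm_eq_abs, sq_abs] at split

lemma exists_sum_norm_sq_le_integral {m : ℝ} (hm : 2 ≤ m) (k : ℕ) :
    ∃ μ > 0, ∀ (E : Type u) [SeminormedAddCommGroup E] [InnerProductSpace ℝ E] (x : ℕ → E),
      μ * ∑ i ∈ range (k + 1), ‖x i‖ ^ 2 ≤ ∫ t in (0 : ℝ)..m, ‖taylorSum (k + 1) x t‖ ^ 2 := by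
  induction k with
  | zero =>
    refine ⟨m, by linarith, fun E _ _ x => ?_⟩
    simp [taylorSum]
  | succ k ih =>
    obtain ⟨μ, hμ, lower⟩ := ih
    set top : ℝ := legendreWeight m (k + 1) / (2 * (k + 1))!
    have htop : 0 < top := div_pos (legendreWeight_pos hm k.succ_ne_zero) (by positivity)
    set c : ℝ := ∫ t in (0 : ℝ)..m, (t ^ (k + 1) / (k + 1)!) ^ 2
    have hc : 0 ≤ c := intervalIntegral.integral_nonneg (by linarith) fun t _ => by positivity
    refine ⟨(2 / μ + (1 + 2 * c / μ) / top)⁻¹, by positivity, fun E _ _ x => ?_⟩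
    set I := ∫ t in (0 : ℝ)..m, ‖taylorSum (k + 1 + 1) x t‖ ^ 2
    have top_le : ‖x (k + 1)‖ ^ 2 * top ≤ I := by
      simpa only [top, mul_div_assoc', div_mul_eq_mul_div, mul_comm] using
        norm_sq_mul_legendreWeight_le_integral (by linarith : 0 ≤ m) (k + 1) x
    rw [inv_mul_le_iff₀ (by positivity), sum_range_succ]
    have top_le' : ‖x (k + 1)‖ ^ 2 ≤ I / top := (le_div_iff₀ htop).mpr top_le
    have lower_le' : ∑ i ∈ range (k + 1), ‖x i‖ ^ 2 ≤ (2 * I + 2 * (c * (I / top))) / μ := by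
      rw [le_div_iff₀' hμ]
      exact (lower E x).trans ((integral_norm_taylorSum_sq_le (by linarith) _ x).trans (by gcongr))
    calc ∑ i ∈ range (k + 1), ‖x i‖ ^ 2 + ‖x (k + 1)‖ ^ 2
        ≤ (2 * I + 2 * (c * (I / top))) / μ + I / top := add_le_add lower_le' top_le'
      _ = (2 / μ + (1 + 2 * c / μ) / top) * I := by ring

lemma exists_sum_norm_sq_add_le_integral {m : ℝ} (hm : 2 ≤ m) {k : ℕ} (hk : k ≠ 0) :
    ∃ μ > 0, ∀ (E : Type u) [SeminormedAddCommGroup E] [InnerProductSpace ℝ E] (x : ℕ → E),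
      μ * ∑ i ∈ range (k + 1), ‖x i‖ ^ 2 + m / (2 * k + 1)! * ‖x k‖ ^ 2 ≤
        ∫ t in (0 : ℝ)..m, ‖taylorSum (k + 1) x t‖ ^ 2 := by
  obtain ⟨μ, hμ, coercive⟩ := exists_sum_norm_sq_le_integral.{u} hm k
  have strict := div_lt_legendreWeight hm hk
  have weight_pos := legendreWeight_pos hm hk
  set θ : ℝ := m / (2 * k + 1) / legendreWeight m k
  have hθ : θ < 1 := (div_lt_one weight_pos).mpr strict
  refine ⟨(1 - θ) * μ, mul_pos (by linarith) hμ, fun E _ _ x => ?_⟩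
  set I := ∫ t in (0 : ℝ)..m, ‖taylorSum (k + 1) x t‖ ^ 2
  have legendre : m / (2 * k + 1)! * ‖x k‖ ^ 2 ≤ θ * I :=
    calc m / (2 * k + 1)! * ‖x k‖ ^ 2
        = θ * (‖x k‖ ^ 2 / (2 * k)! * legendreWeight m k) := by
          simp only [θ, Nat.factorial_succ]
          push_cast
          field_simp
      _ ≤ θ * I := mul_le_mul_of_nonneg_left
          (norm_sq_mul_legendreWeight_le_integral (by linarith) k x) (by positivity)
  calc (1 - θ) * μ * ∑ i ∈ range (k + 1), ‖x i‖ ^ 2 + m / (2 * k + 1)! * ‖x k‖ ^ 2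
      ≤ (1 - θ) * I + θ * I := by
        rw [mul_assoc]
        exact add_le_add (mul_le_mul_of_nonneg_left (coercive E x) (by linarith)) legendre
    _ = I := by ring

end Coercivity

lemma iterate_le_of_two_three {α β : Type*} [Preorder β] {f : α → α} {g : α → β}
    (two : ∀ a, g (f^[2] a) ≤ g a) (three : ∀ a, g (f^[3] a) ≤ g a) {m : ℕ} (hm : 2 ≤ m) (a : α) :
    g (f^[m] a) ≤ g a := by
  induction m using Nat.strong_induction_on generalizing a with
  | _ m ih =>
    rcases (by omega : m = 2 ∨ m = 3 ∨ 2 ≤ m - 2) with rfl | rfl | h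
    · exact two a
    · exact three a
    · rw [← Nat.sub_add_cancel hm, Function.iterate_add_apply]
      exact (ih (m - 2) (by omega) h _).trans (two a)

section SdaScheme

open Finset

variable {V : Type*} [AddCommGroup V] [Module ℝ V] {A P : V →ₗ[ℝ] V}

/-- The operator `L̃ = (I - P)L` of the inner stages, with the time step absorbed into `A = τL`. -/
def stageOp (A P : V →ₗ[ℝ] V) : V →ₗ[ℝ] V := (1 - P) * A

/-- The `i`-th scaled time derivative `(τL̃)^i w` produced by the inner stages. -/
def stage (A P : V →ₗ[ℝ] V) (w : V) (i : ℕ) : V := (stageOp A P ^ i) w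

/-- One step `R̃` of the `r`-stage sdA-RK scheme, with the time step absorbed into `A = τL`. -/
noncomputable def sdaStep (A P : V →ₗ[ℝ] V) (r : ℕ) : V →ₗ[ℝ] V :=
  1 + A * ∑ i ∈ Icc 1 r, (1 / (i ! : ℝ)) • stageOp A P ^ (i - 1)

lemma stageOp_apply (x : V) : stageOp A P x = A x - P (A x) := rfl

lemma stage_zero (w : V) : stage A P w 0 = w := rfl

lemma stage_succ (w : V) (i : ℕ) : stage A P w (i + 1) = stageOp A P (stage A P w i) := by
  rw [stage, pow_succ', Module.End.mul_apply, stage]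

lemma stage_add (w : V) (i j : ℕ) : stage A P w (i + j) = (stageOp A P ^ i) (stage A P w j) := by
  rw [stage, pow_add, Module.End.mul_apply, stage]

lemma sdaStep_smul (L P : V →ₗ[ℝ] V) (τ : ℝ) (r : ℕ) :
    sdaStep (τ • L) P r = 1 + τ • (L * ∑ i ∈ Finset.Icc 1 r,
      (1 / (i.factorial : ℝ)) • (τ • ((1 - P) * L)) ^ (i - 1)) := by
  simp only [sdaStep, stageOp, smul_mul_assoc, mul_smul_comm]

lemma sdaStep_apply (r : ℕ) (w : V) :
    sdaStep A P r w = w + A (taylorPrimitive r (stage A P w) 1) := by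
  simp [sdaStep, taylorPrimitive, stage]

lemma taylorSum_stage_succ (n : ℕ) (w : V) (t : ℝ) :
    taylorSum (n + 1) (stage A P w) t = w + stageOp A P (taylorPrimitive n (stage A P w) t) := by
  rw [taylorSum_succ', map_taylorPrimitive, stage_zero]
  simp only [stage_succ, Function.comp_def]

lemma stage_sdaStep (r : ℕ) (w : V) (j : ℕ) :
    stage A P (sdaStep A P r w) j = taylorSum (r + 1) (fun i => stage A P w (i + j)) 1 +
      (stageOp A P ^ j) (P (A (taylorPrimitive r (stage A P w) 1))) := by
  have step : sdaStep A P r w =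
      taylorSum (r + 1) (stage A P w) 1 + P (A (taylorPrimitive r (stage A P w) 1)) := by
    rw [sdaStep_apply, taylorSum_stage_succ, stageOp_apply, ← add_sub_assoc, sub_add_cancel]
  rw [stage, step, map_add, map_taylorSum]
  simp only [Nat.add_comm _ j, stage_add, Function.comp_def]

end SdaScheme

section SdaStability

open Finset

variable {V E : Type*} [NormedAddCommGroup V] [InnerProductSpace ℝ V]
  [SeminormedAddCommGroup E] [InnerProductSpace ℝ E]

/-- The square root of the quantity controlled by the dissipation of several steps: the jumps of
the first `k + 1` stages and the norm of the next one. -/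
noncomputable def controlNorm (A P : V →ₗ[ℝ] V) (J : V →ₗ[ℝ] E) (k : ℕ) (w : V) : ℝ :=
  √(‖stage A P w (k + 1)‖ ^ 2 + ∑ i ∈ range (k + 1), ‖J (stage A P w i)‖ ^ 2)

/-- The assumptions on the scheme after scaling by the time step: `A = τL`, the map `J` realises
the jump seminorm through `‖J v‖ = √τ |v|_Γ`, and `δ` is of the order of `√(τ/h)`. -/
structure SdaBounds (A P : V →ₗ[ℝ] V) (J : V →ₗ[ℝ] E) (δ : ℝ) : Prop where
  nonneg : 0 ≤ δ
  le_one : δ ≤ 1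
  inner_jump (x y : V) : ⟪J x, J y⟫ = -(⟪A x, y⟫ + ⟪x, A y⟫)
  proj : P.IsSymmetricProjection
  norm_proj_le (x : V) : ‖P (A x)‖ ≤ δ * ‖J x‖
  norm_jump_le (x : V) : ‖J x‖ ≤ δ * ‖x‖
  norm_le (x : V) : ‖A x‖ ≤ δ * ‖x‖

variable {A P : V →ₗ[ℝ] V} {J : V →ₗ[ℝ] E} {δ : ℝ}

lemma controlNorm_nonneg (k : ℕ) (w : V) : 0 ≤ controlNorm A P J k w := Real.sqrt_nonneg _

lemma controlNorm_sq (k : ℕ) (w : V) : controlNorm A P J k w ^ 2 =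
    ‖stage A P w (k + 1)‖ ^ 2 + ∑ i ∈ range (k + 1), ‖J (stage A P w i)‖ ^ 2 :=
  Real.sq_sqrt (by positivity)

namespace SdaBounds

lemma mul_controlNorm_le (H : SdaBounds A P J δ) (k : ℕ) (w : V) :
    δ * controlNorm A P J k w ≤ controlNorm A P J k w :=
  mul_le_of_le_one_left (controlNorm_nonneg k w) H.le_one

lemma mul_controlNorm_nonneg (H : SdaBounds A P J δ) (k : ℕ) (w : V) :
    0 ≤ δ * controlNorm A P J k w :=
  mul_nonneg H.nonneg (controlNorm_nonneg k w)

lemma mul_controlNorm_sq_nonneg (H : SdaBounds A P J δ) (k : ℕ) (w : V) :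
    0 ≤ δ * controlNorm A P J k w ^ 2 :=
  mul_nonneg H.nonneg (sq_nonneg _)

lemma inner_stageOp_stageOp (H : SdaBounds A P J δ) (x y : V) :
    ⟪stageOp A P x, stageOp A P y⟫ = ⟪stageOp A P x, A y⟫ := by
  have kills : P (stageOp A P x) = 0 := by
    rw [stageOp_apply, map_sub, ← Module.End.mul_apply P P, H.proj.isIdempotentElem.eq, sub_self]
  rw [stageOp_apply y, inner_sub_right, ← H.proj.isSymmetric, kills, inner_zero_left, sub_zero]

lemma norm_stageOp_le (H : SdaBounds A P J δ) (x : V) : ‖stageOp A P x‖ ≤ δ * ‖x‖ := by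
  refine le_trans ?_ (H.norm_le x)
  have cauchy_schwarz : ‖stageOp A P x‖ * ‖stageOp A P x‖ ≤ ‖stageOp A P x‖ * ‖A x‖ := by
    rw [← real_inner_self_eq_norm_mul_norm, H.inner_stageOp_stageOp]
    exact real_inner_le_norm _ _
  rcases (norm_nonneg (stageOp A P x)).eq_or_lt with h0 | hpos
  · rw [← h0]
    positivity
  · exact le_of_mul_le_mul_left cauchy_schwarz hpos

lemma norm_stageOp_pow_le (H : SdaBounds A P J δ) (n : ℕ) (x : V) :
    ‖(stageOp A P ^ n) x‖ ≤ ‖x‖ := by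
  induction n with
  | zero => rfl
  | succ n ih =>
    rw [pow_succ', Module.End.mul_apply]
    exact (H.norm_stageOp_le _).trans
      ((mul_le_of_le_one_left (norm_nonneg _) H.le_one).trans ih)

lemma norm_stage_le (H : SdaBounds A P J δ) {k n : ℕ} (hn : k + 1 ≤ n) (w : V) :
    ‖stage A P w n‖ ≤ controlNorm A P J k w := by
  rw [← Nat.sub_add_cancel hn, stage_add]
  refine (H.norm_stageOp_pow_le _ _).trans (Real.le_sqrt_of_sq_le ?_)
  exact le_add_of_nonneg_right (by positivity)

lemma norm_stage_le_mul (H : SdaBounds A P J δ) {k n : ℕ} (hn : k + 2 ≤ n) (w : V) :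
    ‖stage A P w n‖ ≤ δ * controlNorm A P J k w := by
  obtain ⟨n, rfl⟩ : ∃ j, n = j + 1 := ⟨n - 1, by omega⟩
  rw [stage_succ]
  exact (H.norm_stageOp_le _).trans
    (mul_le_mul_of_nonneg_left (H.norm_stage_le (by omega) w) H.nonneg)

lemma norm_jump_stage_le_mul (H : SdaBounds A P J δ) {k n : ℕ} (hn : k + 1 ≤ n) (w : V) :
    ‖J (stage A P w n)‖ ≤ δ * controlNorm A P J k w :=
  (H.norm_jump_le _).trans (mul_le_mul_of_nonneg_left (H.norm_stage_le hn w) H.nonneg)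

lemma norm_jump_stage_le (H : SdaBounds A P J δ) (k : ℕ) (w : V) (n : ℕ) :
    ‖J (stage A P w n)‖ ≤ controlNorm A P J k w := by
  by_cases hn : k + 1 ≤ n
  · exact (H.norm_jump_stage_le_mul hn w).trans (H.mul_controlNorm_le k w)
  · refine Real.le_sqrt_of_sq_le (le_add_of_nonneg_of_le (sq_nonneg _) ?_)
    exact single_le_sum (f := fun i => ‖J (stage A P w i)‖ ^ 2) (fun i _ => sq_nonneg _)
      (mem_range.mpr (by omega))

lemma abs_inner_jump_stage_le (H : SdaBounds A P J δ) {k i : ℕ} (hi : k + 1 ≤ i) (w : V) (j : ℕ) :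
    |⟪J (stage A P w i), J (stage A P w j)⟫| ≤ δ * controlNorm A P J k w ^ 2 :=
  calc |⟪J (stage A P w i), J (stage A P w j)⟫|
      ≤ ‖J (stage A P w i)‖ * ‖J (stage A P w j)‖ := abs_real_inner_le_norm _ _
    _ ≤ δ * controlNorm A P J k w * controlNorm A P J k w :=
        mul_le_mul (H.norm_jump_stage_le_mul hi w) (H.norm_jump_stage_le k w j) (norm_nonneg _)
          (H.mul_controlNorm_nonneg k w)
    _ = δ * controlNorm A P J k w ^ 2 := by ring

lemma abs_inner_stage_le (H : SdaBounds A P J δ) {k i j : ℕ} (hi : k + 2 ≤ i) (hj : k + 1 ≤ j)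
    (w : V) : |⟪stage A P w i, stage A P w j⟫| ≤ δ * controlNorm A P J k w ^ 2 :=
  calc |⟪stage A P w i, stage A P w j⟫| ≤ ‖stage A P w i‖ * ‖stage A P w j‖ :=
        abs_real_inner_le_norm _ _
    _ ≤ δ * controlNorm A P J k w * controlNorm A P J k w :=
        mul_le_mul (H.norm_stage_le_mul hi w) (H.norm_stage_le hj w) (norm_nonneg _)
          (H.mul_controlNorm_nonneg k w)
    _ = δ * controlNorm A P J k w ^ 2 := by ring

lemma inner_stage_succ_stage (H : SdaBounds A P J δ) (w : V) {i j : ℕ} (hi : i ≠ 0) (hj : j ≠ 0) :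
    ⟪stage A P w (i + 1), stage A P w j⟫ =
      -⟪stage A P w i, stage A P w (j + 1)⟫ - ⟪J (stage A P w i), J (stage A P w j)⟫ := by
  have step (a b : ℕ) (hb : b ≠ 0) :
      ⟪stage A P w b, stage A P w (a + 1)⟫ = ⟪stage A P w b, A (stage A P w a)⟫ := by
    obtain ⟨b, rfl⟩ := Nat.exists_eq_succ_of_ne_zero hb
    rw [stage_succ w a, stage_succ w b, H.inner_stageOp_stageOp]
  rw [H.inner_jump, real_inner_comm, step i j hj, step j i hi, real_inner_comm]
  ring

lemma abs_inner_stage_add_sub_le (H : SdaBounds A P J δ) (w : V) {k a : ℕ} (ha : k + 1 ≤ a) (d : ℕ)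
    {b : ℕ} (hb : b ≠ 0) :
    |⟪stage A P w (a + d), stage A P w b⟫ - (-1) ^ d * ⟪stage A P w a, stage A P w (b + d)⟫| ≤
      d * (δ * controlNorm A P J k w ^ 2) := by
  induction d generalizing b with
  | zero => simp
  | succ d ih =>
    have rest := ih b.succ_ne_zero
    have jump := H.abs_inner_jump_stage_le (by omega : k + 1 ≤ a + d) w b
    rw [← add_assoc, H.inner_stage_succ_stage w (by omega) hb, ← add_assoc, Nat.add_right_comm b,
      pow_succ]
    rw [abs_le] at rest jump ⊢
    push_cast
    constructor <;> linarith [rest.1, rest.2, jump.1, jump.2]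

lemma two_mul_inner_stage_one_le (H : SdaBounds A P J δ) {k : ℕ} (hk : k ≠ 0) (hev : Even k)
    (w : V) : 2 * ⟪stage A P w (2 * k), stage A P w 1⟫ ≤
      ‖J (stage A P w k)‖ ^ 2 + 2 * k * (δ * controlNorm A P J k w ^ 2) := by
  have shift := H.abs_inner_stage_add_sub_le w (le_refl (k + 1)) (k - 1) one_ne_zero
  have diagonal := H.inner_stage_succ_stage w hk hk
  rw [show k + 1 + (k - 1) = 2 * k by omega, show 1 + (k - 1) = k by omega,
    (Nat.Even.sub_odd (by omega) hev odd_one).neg_one_pow, Nat.cast_pred (by omega)] at shift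
  rw [real_inner_comm, real_inner_self_eq_norm_sq, real_inner_comm] at diagonal
  linarith [(abs_le.mp shift).2, H.mul_controlNorm_sq_nonneg k w]

lemma two_mul_inner_stage_two_le (H : SdaBounds A P J δ) {k : ℕ} (hk : k ≠ 0) (hev : Even k)
    (w : V) : 2 * ⟪stage A P w (2 * k), stage A P w 2⟫ ≤
      -(2 * ‖stage A P w (k + 1)‖ ^ 2) + 2 * k * (δ * controlNorm A P J k w ^ 2) := by
  have shift := H.abs_inner_stage_add_sub_le w (le_refl (k + 1)) (k - 1) two_ne_zero
  rw [show k + 1 + (k - 1) = 2 * k by omega, show 2 + (k - 1) = k + 1 by omega,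
    (Nat.Even.sub_odd (by omega) hev odd_one).neg_one_pow, Nat.cast_pred (by omega),
    real_inner_self_eq_norm_sq] at shift
  linarith [(abs_le.mp shift).2, H.mul_controlNorm_sq_nonneg k w]

lemma abs_inner_stage_le_mul (H : SdaBounds A P J δ) {k b : ℕ} (hk : 2 ≤ k) (hb : 3 ≤ b) (w : V) :
    |⟪stage A P w (2 * k), stage A P w b⟫| ≤ k * (δ * controlNorm A P J k w ^ 2) := by
  have hk' : (1 : ℝ) ≤ k := mod_cast (by omega : 1 ≤ k)
  by_cases hbk : b ≤ k
  · have shift := H.abs_inner_stage_add_sub_le w (by omega : k + 1 ≤ k - 1 + b) (k + 1 - b)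
      (by omega : b ≠ 0)
    rw [show k - 1 + b + (k + 1 - b) = 2 * k by omega, show b + (k + 1 - b) = k + 1 by omega]
      at shift
    have small := H.abs_inner_stage_le (by omega : k + 2 ≤ k - 1 + b) le_rfl w
    have cast_le : ((k + 1 - b : ℕ) : ℝ) + 1 ≤ k := mod_cast (by omega : k + 1 - b + 1 ≤ k)
    calc |⟪stage A P w (2 * k), stage A P w b⟫|
        ≤ (k + 1 - b : ℕ) * (δ * controlNorm A P J k w ^ 2) +
            |(-1) ^ (k + 1 - b) * ⟪stage A P w (k - 1 + b), stage A P w (k + 1)⟫| :=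
          (sub_le_iff_le_add.mp (abs_sub_abs_le_abs_sub _ _)).trans (by gcongr)
      _ ≤ (k + 1 - b : ℕ) * (δ * controlNorm A P J k w ^ 2) +
            δ * controlNorm A P J k w ^ 2 := by
          rw [abs_mul, abs_pow, abs_neg, abs_one, one_pow, one_mul]
          gcongr
      _ = ((k + 1 - b : ℕ) + 1) * (δ * controlNorm A P J k w ^ 2) := by ring
      _ ≤ k * (δ * controlNorm A P J k w ^ 2) :=
          mul_le_mul_of_nonneg_right cast_le (H.mul_controlNorm_sq_nonneg k w)
  · exact (H.abs_inner_stage_le (by omega) (by omega) w).trans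
      (le_mul_of_one_le_left (H.mul_controlNorm_sq_nonneg k w) hk')

lemma inner_stage_taylorSum (H : SdaBounds A P J δ) (w : V) {i : ℕ} (hi : i ≠ 0) (n : ℕ) (t : ℝ) :
    ⟪stage A P w i, A (taylorSum n (stage A P w) t)⟫ =
      ∑ j ∈ range n, t ^ j / j ! * ⟪stage A P w i, stage A P w (j + 1)⟫ := by
  obtain ⟨i, rfl⟩ := Nat.exists_eq_succ_of_ne_zero hi
  rw [map_taylorSum]
  simp only [taylorSum, inner_sum, inner_smul_right, Function.comp_apply]
  refine sum_congr rfl fun j _ => ?_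
  rw [stage_succ w i, stage_succ w j, H.inner_stageOp_stageOp]

lemma two_mul_inner_stage_taylorSum_le (H : SdaBounds A P J δ) {k : ℕ} (hk : 2 ≤ k) (hev : Even k)
    (w : V) {t : ℝ} (h0 : 0 ≤ t) (h1 : t ≤ 1) :
    2 * ⟪stage A P w (2 * k), A (taylorSum (2 * k) (stage A P w) t)⟫ ≤
      ‖J (stage A P w k)‖ ^ 2 - 2 * t * ‖stage A P w (k + 1)‖ ^ 2 +
        (2 + Real.exp 1) * (2 * k * (δ * controlNorm A P J k w ^ 2)) := by
  set D := k * (δ * controlNorm A P J k w ^ 2)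
  have hD : 0 ≤ D := mul_nonneg k.cast_nonneg (H.mul_controlNorm_sq_nonneg k w)
  have tail : ∑ j ∈ Ico 2 (2 * k), t ^ j / j ! * ⟪stage A P w (2 * k), stage A P w (j + 1)⟫ ≤
      Real.exp 1 * D :=
    calc ∑ j ∈ Ico 2 (2 * k), t ^ j / j ! * ⟪stage A P w (2 * k), stage A P w (j + 1)⟫
        ≤ ∑ j ∈ Ico 2 (2 * k), t ^ j / j ! * D := by
          refine sum_le_sum fun j hj => mul_le_mul_of_nonneg_left ?_ (by positivity)
          exact (le_abs_self _).trans
            (H.abs_inner_stage_le_mul hk (by have := mem_Ico.mp hj; omega) w)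
      _ ≤ Real.exp 1 * D := by
          rw [← sum_mul]
          exact mul_le_mul_of_nonneg_right
            ((sum_pow_div_factorial_le_exp h0 _).trans (Real.exp_le_exp.mpr h1)) hD
  have first := H.two_mul_inner_stage_one_le (by omega) hev w
  have second := mul_le_mul_of_nonneg_left (H.two_mul_inner_stage_two_le (by omega) hev w) h0
  have damp : t * D ≤ D := mul_le_of_le_one_left hD h1
  rw [H.inner_stage_taylorSum w (by omega), ← sum_range_add_sum_Ico _ (by omega : 2 ≤ 2 * k),
    sum_range_succ, sum_range_one]
  simp only [pow_zero, pow_one, Nat.factorial_zero, Nat.factorial_one, Nat.cast_one, div_one,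
    one_mul, zero_add, Nat.reduceAdd]
  simp only [D] at tail damp
  linarith

lemma norm_sq_jump_taylorSum_le (H : SdaBounds A P J δ) {k n : ℕ} (hn : k + 1 ≤ n) (w : V)
    {t : ℝ} (h0 : 0 ≤ t) (h1 : t ≤ 1) :
    ‖taylorSum (k + 1) (J ∘ stage A P w) t‖ ^ 2 ≤ ‖taylorSum n (J ∘ stage A P w) t‖ ^ 2 +
      2 * Real.exp 1 ^ 2 * (δ * controlNorm A P J k w ^ 2) := by
  have short : ‖taylorSum (k + 1) (J ∘ stage A P w) t‖ ≤
      Real.exp 1 * controlNorm A P J k w :=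
    (norm_taylorSum_le h0 (controlNorm_nonneg k w) fun i _ => H.norm_jump_stage_le k w i).trans
      (mul_le_mul_of_nonneg_right (Real.exp_le_exp.mpr h1) (controlNorm_nonneg k w))
  have tail : ‖taylorSum n (J ∘ stage A P w) t - taylorSum (k + 1) (J ∘ stage A P w) t‖ ≤
      Real.exp 1 * (δ * controlNorm A P J k w) := by
    rw [taylorSum_sub_taylorSum hn]
    exact (norm_sum_pow_div_factorial_smul_le h0 (H.mul_controlNorm_nonneg k w) fun i hi =>
      H.norm_jump_stage_le_mul (mem_Ico.mp hi).1 w).trans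
      (mul_le_mul_of_nonneg_right (Real.exp_le_exp.mpr h1) (H.mul_controlNorm_nonneg k w))
  exact (norm_sq_le_norm_sq_add short tail).trans_eq (by ring)

lemma two_mul_inner_apply_self (H : SdaBounds A P J δ) (x : V) :
    2 * ⟪x, A x⟫ = -‖J x‖ ^ 2 := by
  rw [← real_inner_self_eq_norm_sq, H.inner_jump, real_inner_comm]
  ring

lemma energy_rate_le (H : SdaBounds A P J δ) {k : ℕ} (hk : 2 ≤ k) (hev : Even k) (w : V)
    {t : ℝ} (h0 : 0 ≤ t) (h1 : t ≤ 1) :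
    2 * ⟪taylorSum (2 * k + 1) (stage A P w) t, A (taylorSum (2 * k) (stage A P w) t)⟫ ≤
      -‖taylorSum (k + 1) (J ∘ stage A P w) t‖ ^ 2 +
        t ^ (2 * k) / (2 * k)! * ‖J (stage A P w k)‖ ^ 2 -
        t ^ (2 * k + 1) * (2 / (2 * k)! * ‖stage A P w (k + 1)‖ ^ 2) +
        (2 * Real.exp 1 ^ 2 + (2 + Real.exp 1) * (2 * k)) * (δ * controlNorm A P J k w ^ 2) := by
  have hD := H.mul_controlNorm_sq_nonneg k w
  have truncation := H.norm_sq_jump_taylorSum_le (by omega : k + 1 ≤ 2 * k) w h0 h1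
  have pairing := mul_le_mul_of_nonneg_left (H.two_mul_inner_stage_taylorSum_le hk hev w h0 h1)
    (by positivity : 0 ≤ t ^ (2 * k) / (2 * k)!)
  have remainder := mul_le_of_le_one_left
    (by positivity : 0 ≤ (2 + Real.exp 1) * (2 * k * (δ * controlNorm A P J k w ^ 2)))
    (pow_div_factorial_le_one h0 h1 (2 * k))
  have damping : t ^ (2 * k + 1) * (2 / (2 * k)! * ‖stage A P w (k + 1)‖ ^ 2) =
      t ^ (2 * k) / (2 * k)! * (2 * t * ‖stage A P w (k + 1)‖ ^ 2) := by ring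
  rw [taylorSum_succ, inner_add_left, mul_add, H.two_mul_inner_apply_self, inner_smul_left,
    map_taylorSum J, conj_trivial, damping]
  linarith

lemma hasDerivAt_energy (H : SdaBounds A P J δ) (r : ℕ) (w : V) (t : ℝ) :
    HasDerivAt (fun t => ‖w + A (taylorPrimitive r (stage A P w) t)‖ ^ 2 -
        ‖P (A (taylorPrimitive r (stage A P w) t))‖ ^ 2)
      (2 * ⟪taylorSum (r + 1) (stage A P w) t, A (taylorSum r (stage A P w) t)⟫) t := by
  have deriv (B : V →ₗ[ℝ] V) : HasDerivAt (fun t => B (taylorPrimitive r (stage A P w) t))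
      (B (taylorSum r (stage A P w) t)) t := by
    simpa only [map_taylorPrimitive, map_taylorSum] using
      hasDerivAt_taylorPrimitive r (B ∘ stage A P w) t
  refine (((deriv A).const_add w).norm_sq.sub (deriv (P * A)).norm_sq).congr_deriv ?_
  simp only [Module.End.mul_apply]
  rw [← H.proj.isSymmetric, ← Module.End.mul_apply P P, H.proj.isIdempotentElem.eq,
    taylorSum_stage_succ, stageOp_apply, ← add_sub_assoc, inner_sub_left]
  ring

lemma norm_sq_sdaStep (H : SdaBounds A P J δ) (r : ℕ) (w : V) :
    ‖sdaStep A P r w‖ ^ 2 = ‖w‖ ^ 2 + ‖P (A (taylorPrimitive r (stage A P w) 1))‖ ^ 2 +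
      ∫ t in (0 : ℝ)..1,
        2 * ⟪taylorSum (r + 1) (stage A P w) t, A (taylorSum r (stage A P w) t)⟫ := by
  rw [intervalIntegral.integral_eq_sub_of_hasDerivAt (fun t _ => H.hasDerivAt_energy r w t)
    (Continuous.intervalIntegrable (by simp only [map_taylorSum A]; fun_prop) _ _),
    sdaStep_apply]
  simp only [taylorPrimitive_zero_right, map_zero, add_zero, norm_zero]
  ring

lemma norm_proj_taylorPrimitive_le (H : SdaBounds A P J δ) (k n : ℕ) (w : V) :
    ‖P (A (taylorPrimitive n (stage A P w) 1))‖ ≤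
      δ * (Real.exp 1 * controlNorm A P J k w) := by
  refine (H.norm_proj_le _).trans (mul_le_mul_of_nonneg_left ?_ H.nonneg)
  rw [map_taylorPrimitive]
  exact norm_taylorPrimitive_le zero_le_one (controlNorm_nonneg k w) fun i _ =>
    H.norm_jump_stage_le k w i

lemma integral_energy_rate_le (H : SdaBounds A P J δ) {k : ℕ} (hk : 2 ≤ k) (hev : Even k) (w : V) :
    ∫ t in (0 : ℝ)..1,
        2 * ⟪taylorSum (2 * k + 1) (stage A P w) t, A (taylorSum (2 * k) (stage A P w) t)⟫ ≤
      -(∫ t in (0 : ℝ)..1, ‖taylorSum (k + 1) (J ∘ stage A P w) t‖ ^ 2) +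
        1 / (2 * k + 1)! * ‖J (stage A P w k)‖ ^ 2 -
        2 / ((2 * k)! * (2 * k + 2)) * ‖stage A P w (k + 1)‖ ^ 2 +
        (2 * Real.exp 1 ^ 2 + (2 + Real.exp 1) * (2 * k)) * (δ * controlNorm A P J k w ^ 2) := by
  refine (intervalIntegral.integral_mono_on zero_le_one
    (Continuous.intervalIntegrable (by simp only [map_taylorSum A]; fun_prop) _ _)
    (Continuous.intervalIntegrable (by fun_prop) _ _)
    fun t ht => H.energy_rate_le hk hev w ht.1 ht.2).trans_eq ?_
  rw [intervalIntegral.integral_add, intervalIntegral.integral_sub, intervalIntegral.integral_add,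
    intervalIntegral.integral_neg, intervalIntegral.integral_mul_const,
    intervalIntegral.integral_mul_const, intervalIntegral.integral_div, integral_pow,
    integral_pow, intervalIntegral.integral_const, Nat.factorial_succ]
  · push_cast
    simp only [one_pow, ne_eq, zero_pow, Nat.succ_ne_zero, not_false_eq_true, smul_eq_mul, sub_zero]
    field_simp
    ring
  all_goals exact Continuous.intervalIntegrable (by fun_prop) _ _

lemma norm_sq_sdaStep_le (H : SdaBounds A P J δ) {k : ℕ} (hk : 2 ≤ k) (hev : Even k) (w : V) :
    ‖sdaStep A P (2 * k) w‖ ^ 2 ≤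
      ‖w‖ ^ 2 - (∫ t in (0 : ℝ)..1, ‖taylorSum (k + 1) (J ∘ stage A P w) t‖ ^ 2) +
        1 / (2 * k + 1)! * ‖J (stage A P w k)‖ ^ 2 -
        2 / ((2 * k)! * (2 * k + 2)) * ‖stage A P w (k + 1)‖ ^ 2 +
        (3 * Real.exp 1 ^ 2 + (2 + Real.exp 1) * (2 * k)) * (δ * controlNorm A P J k w ^ 2) := by
  have correction : ‖P (A (taylorPrimitive (2 * k) (stage A P w) 1))‖ ^ 2 ≤
      Real.exp 1 ^ 2 * (δ * controlNorm A P J k w ^ 2) :=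
    calc _ ≤ (δ * (Real.exp 1 * controlNorm A P J k w)) ^ 2 :=
          pow_le_pow_left₀ (norm_nonneg _) (H.norm_proj_taylorPrimitive_le k _ w) 2
      _ = δ ^ 2 * (Real.exp 1 ^ 2 * controlNorm A P J k w ^ 2) := by ring
      _ ≤ δ * (Real.exp 1 ^ 2 * controlNorm A P J k w ^ 2) :=
          mul_le_mul_of_nonneg_right (pow_le_of_le_one H.nonneg H.le_one two_ne_zero)
            (by positivity)
      _ = _ := by ring
  rw [H.norm_sq_sdaStep]
  linarith [H.integral_energy_rate_le hk hev w]

lemma norm_stageOp_pow_proj_le (H : SdaBounds A P J δ) (k r : ℕ) (w : V) (j : ℕ) :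
    ‖(stageOp A P ^ j) (P (A (taylorPrimitive r (stage A P w) 1)))‖ ≤
      Real.exp 1 * (δ * controlNorm A P J k w) :=
  (H.norm_stageOp_pow_le j _).trans
    ((H.norm_proj_taylorPrimitive_le k r w).trans_eq (mul_left_comm _ _ _))

lemma norm_jump_stage_sdaStep_sub_le (H : SdaBounds A P J δ) {k r : ℕ} (hkr : k ≤ r) (w : V)
    (j : ℕ) :
    ‖J (stage A P (sdaStep A P r w) j) -
        taylorSum (k + 1 - j) (fun i => J (stage A P w (i + j))) 1‖ ≤
      2 * Real.exp 1 * (δ * controlNorm A P J k w) := by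
  have tail : ‖taylorSum (r + 1) (fun i => J (stage A P w (i + j))) 1 -
      taylorSum (k + 1 - j) (fun i => J (stage A P w (i + j))) 1‖ ≤
        Real.exp 1 * (δ * controlNorm A P J k w) := by
    rw [taylorSum_sub_taylorSum (by omega)]
    exact norm_sum_pow_div_factorial_smul_le zero_le_one (H.mul_controlNorm_nonneg k w)
      fun i hi => H.norm_jump_stage_le_mul (by have := mem_Ico.mp hi; omega) w
  have correction := (H.norm_jump_le _).trans
    ((mul_le_of_le_one_left (norm_nonneg _) H.le_one).trans (H.norm_stageOp_pow_proj_le k r w j))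
  rw [stage_sdaStep, map_add, map_taylorSum, add_sub_right_comm]
  exact (norm_add_le_of_le tail correction).trans_eq (by ring)

lemma norm_jump_stage_sdaStep_le (H : SdaBounds A P J δ) (k r : ℕ) (w : V) (j : ℕ) :
    ‖J (stage A P (sdaStep A P r w) j)‖ ≤ 2 * Real.exp 1 * controlNorm A P J k w := by
  have correction := (H.norm_jump_le _).trans
    ((mul_le_of_le_one_left (norm_nonneg _) H.le_one).trans (H.norm_stageOp_pow_proj_le k r w j))
  have small := mul_le_mul_of_nonneg_left (H.mul_controlNorm_le k w) (Real.exp_nonneg 1)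
  rw [stage_sdaStep, map_add, map_taylorSum]
  refine (norm_add_le_of_le (norm_taylorSum_le zero_le_one (controlNorm_nonneg k w)
    fun i _ => H.norm_jump_stage_le k w (i + j)) (correction.trans small)).trans_eq (by ring)

lemma norm_stage_sdaStep_le (H : SdaBounds A P J δ) (k r : ℕ) (w : V) :
    ‖stage A P (sdaStep A P r w) (k + 1)‖ ≤ 2 * Real.exp 1 * controlNorm A P J k w := by
  have small := mul_le_mul_of_nonneg_left (H.mul_controlNorm_le k w) (Real.exp_nonneg 1)
  rw [stage_sdaStep]
  refine (norm_add_le_of_le (norm_taylorSum_le zero_le_one (controlNorm_nonneg k w)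
    fun i _ => H.norm_stage_le (Nat.le_add_left _ i) w)
    ((H.norm_stageOp_pow_proj_le k r w (k + 1)).trans small)).trans_eq (by ring)

lemma controlNorm_sdaStep_sq_le (H : SdaBounds A P J δ) (k r : ℕ) (w : V) :
    controlNorm A P J k (sdaStep A P r w) ^ 2 ≤
      4 * (k + 2) * Real.exp 1 ^ 2 * controlNorm A P J k w ^ 2 := by
  have sq_le {a : ℝ} (h0 : 0 ≤ a) (ha : a ≤ 2 * Real.exp 1 * controlNorm A P J k w) :
      a ^ 2 ≤ 4 * Real.exp 1 ^ 2 * controlNorm A P J k w ^ 2 :=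
    (pow_le_pow_left₀ h0 ha 2).trans_eq (by ring)
  have jumps := sum_le_card_nsmul (range (k + 1))
    (fun i => ‖J (stage A P (sdaStep A P r w) i)‖ ^ 2) _
    fun i _ => sq_le (norm_nonneg _) (H.norm_jump_stage_sdaStep_le k r w i)
  have last := sq_le (norm_nonneg _) (H.norm_stage_sdaStep_le k r w)
  rw [card_range, nsmul_eq_mul] at jumps
  push_cast at jumps
  rw [controlNorm_sq _ (sdaStep A P r w)]
  linarith

lemma norm_sq_jump_taylorSum_add_one_le (H : SdaBounds A P J δ) {k r : ℕ} (hkr : k ≤ r) (w : V)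
    {t : ℝ} (ht : 0 ≤ t) :
    ‖taylorSum (k + 1) (J ∘ stage A P w) (t + 1)‖ ^ 2 ≤
      ‖taylorSum (k + 1) (J ∘ stage A P (sdaStep A P r w)) t‖ ^ 2 +
        4 * Real.exp (t + 1) ^ 2 * (δ * controlNorm A P J k w ^ 2) := by
  have bound : ‖taylorSum (k + 1) (J ∘ stage A P w) (t + 1)‖ ≤
      Real.exp (t + 1) * controlNorm A P J k w :=
    norm_taylorSum_le (by linarith) (controlNorm_nonneg k w) fun i _ => H.norm_jump_stage_le k w i
  have close : ‖taylorSum (k + 1) (J ∘ stage A P (sdaStep A P r w)) t -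
      taylorSum (k + 1) (J ∘ stage A P w) (t + 1)‖ ≤
        Real.exp t * (2 * Real.exp 1 * (δ * controlNorm A P J k w)) := by
    rw [taylorSum_add, taylorSum, taylorSum, ← sum_sub_distrib]
    simp only [← smul_sub]
    exact norm_sum_pow_div_factorial_smul_le ht
      (mul_nonneg (by positivity) (H.mul_controlNorm_nonneg k w))
      fun j _ => H.norm_jump_stage_sdaStep_sub_le hkr w j
  refine (norm_sq_le_norm_sq_add bound close).trans_eq ?_
  rw [Real.exp_add]
  ring

lemma norm_sq_jump_stage_sdaStep_le (H : SdaBounds A P J δ) {k r : ℕ} (hkr : k ≤ r) (w : V) :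
    ‖J (stage A P (sdaStep A P r w) k)‖ ^ 2 ≤
      ‖J (stage A P w k)‖ ^ 2 + 8 * Real.exp 1 ^ 2 * (δ * controlNorm A P J k w ^ 2) := by
  have close := H.norm_jump_stage_sdaStep_sub_le hkr w k
  rw [Nat.add_sub_cancel_left, norm_sub_rev] at close
  simp only [taylorSum, sum_range_one, pow_zero, Nat.factorial_zero, Nat.cast_one, div_one,
    one_smul, zero_add] at close
  exact (norm_sq_le_norm_sq_add (H.norm_jump_stage_sdaStep_le k r w k) close).trans_eq (by ring)

lemma integral_norm_sq_jump_taylorSum_add_one_le (H : SdaBounds A P J δ) {k r : ℕ} (hkr : k ≤ r)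
    (w : V) {m : ℝ} (hm : 0 ≤ m) :
    ∫ t in (0 : ℝ)..(m + 1), ‖taylorSum (k + 1) (J ∘ stage A P w) t‖ ^ 2 ≤
      (∫ t in (0 : ℝ)..1, ‖taylorSum (k + 1) (J ∘ stage A P w) t‖ ^ 2) +
        (∫ t in (0 : ℝ)..m, ‖taylorSum (k + 1) (J ∘ stage A P (sdaStep A P r w)) t‖ ^ 2) +
        4 * m * Real.exp (m + 1) ^ 2 * (δ * controlNorm A P J k w ^ 2) := by
  have shifted : ∫ t in (0 : ℝ)..m, ‖taylorSum (k + 1) (J ∘ stage A P w) (t + 1)‖ ^ 2 ≤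
      ∫ t in (0 : ℝ)..m, (‖taylorSum (k + 1) (J ∘ stage A P (sdaStep A P r w)) t‖ ^ 2 +
        4 * Real.exp (m + 1) ^ 2 * (δ * controlNorm A P J k w ^ 2)) := by
    refine intervalIntegral.integral_mono_on hm (Continuous.intervalIntegrable (by fun_prop) _ _)
      (Continuous.intervalIntegrable (by fun_prop) _ _) fun t ht => ?_
    have := H.mul_controlNorm_sq_nonneg k w
    refine (H.norm_sq_jump_taylorSum_add_one_le hkr w ht.1).trans ?_
    gcongr
    exact ht.2
  rw [intervalIntegral.integral_add (Continuous.intervalIntegrable (by fun_prop) _ _)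
      (Continuous.intervalIntegrable (by fun_prop) _ _), intervalIntegral.integral_const,
    smul_eq_mul, sub_zero, intervalIntegral.integral_comp_add_right
      (fun t => ‖taylorSum (k + 1) (J ∘ stage A P w) t‖ ^ 2), zero_add] at shifted
  rw [← intervalIntegral.integral_add_adjacent_intervals (b := 1)
    (Continuous.intervalIntegrable (by fun_prop) _ _)
    (Continuous.intervalIntegrable (by fun_prop) _ _)]
  linarith

end SdaBounds

lemma exists_norm_sq_sdaStep_pow_le {k : ℕ} (hk : 2 ≤ k) (hev : Even k) {m : ℕ} (hm : 1 ≤ m) :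
    ∃ C ≥ 0, ∀ (V : Type u) (E : Type v) [NormedAddCommGroup V] [InnerProductSpace ℝ V]
      [SeminormedAddCommGroup E] [InnerProductSpace ℝ E] (A P : V →ₗ[ℝ] V) (J : V →ₗ[ℝ] E) (δ : ℝ),
      SdaBounds A P J δ → ∀ w,
      ‖(sdaStep A P (2 * k) ^ m) w‖ ^ 2 ≤
        ‖w‖ ^ 2 - (∫ t in (0 : ℝ)..m, ‖taylorSum (k + 1) (J ∘ stage A P w) t‖ ^ 2) +
          m / (2 * k + 1)! * ‖J (stage A P w k)‖ ^ 2 -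
          2 / ((2 * k)! * (2 * k + 2)) * ‖stage A P w (k + 1)‖ ^ 2 +
          C * (δ * controlNorm A P J k w ^ 2) := by
  induction m, hm using Nat.le_induction with
  | base =>
    refine ⟨3 * Real.exp 1 ^ 2 + (2 + Real.exp 1) * (2 * k), by positivity,
      fun V E _ _ _ _ A P J δ H w => ?_⟩
    simpa only [pow_one, Nat.cast_one] using H.norm_sq_sdaStep_le hk hev w
  | succ m _ ih =>
    obtain ⟨C, hC, bound⟩ := ih
    refine ⟨C * (4 * (k + 2) * Real.exp 1 ^ 2) + 4 * m * Real.exp (m + 1) ^ 2 +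
      m / (2 * k + 1)! * (8 * Real.exp 1 ^ 2) + (3 * Real.exp 1 ^ 2 + (2 + Real.exp 1) * (2 * k)),
      by positivity, fun V E _ _ _ _ A P J δ H w => ?_⟩
    have later := bound V E A P J δ H (sdaStep A P (2 * k) w)
    have first := H.norm_sq_sdaStep_le hk hev w
    have dissipation := H.integral_norm_sq_jump_taylorSum_add_one_le (by omega : k ≤ 2 * k) w
      m.cast_nonneg
    have top_jump := mul_le_mul_of_nonneg_left
      (H.norm_sq_jump_stage_sdaStep_le (by omega : k ≤ 2 * k) w)
      (by positivity : 0 ≤ (m : ℝ) / (2 * k + 1)!)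
    have control := mul_le_mul_of_nonneg_left (mul_le_mul_of_nonneg_left
      (H.controlNorm_sdaStep_sq_le k (2 * k) w) H.nonneg) hC
    have damping : 0 ≤ 2 / ((2 * k)! * (2 * k + 2)) *
        ‖stage A P (sdaStep A P (2 * k) w) (k + 1)‖ ^ 2 := by positivity
    rw [pow_succ (sdaStep A P (2 * k)), Module.End.mul_apply]
    push_cast
    rw [add_div]
    linarith

lemma exists_norm_sdaStep_pow_le {k : ℕ} (hk : 2 ≤ k) (hev : Even k) {m : ℕ} (hm : 2 ≤ m) :
    ∃ δ₀ > 0, ∀ (V : Type u) (E : Type v) [NormedAddCommGroup V] [InnerProductSpace ℝ V]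
      [SeminormedAddCommGroup E] [InnerProductSpace ℝ E] (A P : V →ₗ[ℝ] V) (J : V →ₗ[ℝ] E) (δ : ℝ),
      SdaBounds A P J δ → δ ≤ δ₀ → ∀ w, ‖(sdaStep A P (2 * k) ^ m) w‖ ≤ ‖w‖ := by
  obtain ⟨C, hC, bound⟩ := exists_norm_sq_sdaStep_pow_le.{u, v} hk hev (by omega : 1 ≤ m)
  obtain ⟨μ, hμ, coercive⟩ := exists_sum_norm_sq_add_le_integral.{v} (m := m) (mod_cast hm)
    (by omega : k ≠ 0)
  set c : ℝ := 2 / ((2 * k)! * (2 * k + 2))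
  have hc : 0 < c := by positivity
  refine ⟨min μ c / (C + 1), div_pos (lt_min hμ hc) (by positivity),
    fun V E _ _ _ _ A P J δ H hδ w => ?_⟩
  have absorb : C * (δ * controlNorm A P J k w ^ 2) ≤
      μ * ∑ i ∈ range (k + 1), ‖J (stage A P w i)‖ ^ 2 + c * ‖stage A P w (k + 1)‖ ^ 2 :=
    calc C * (δ * controlNorm A P J k w ^ 2)
        ≤ δ * (C + 1) * controlNorm A P J k w ^ 2 := by
          linarith [H.mul_controlNorm_sq_nonneg k w]
      _ ≤ min μ c * controlNorm A P J k w ^ 2 := by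
          gcongr
          exact (le_div_iff₀ (by positivity)).mp hδ
      _ ≤ _ := by
          rw [controlNorm_sq, mul_add, add_comm]
          gcongr
          exacts [min_le_left _ _, min_le_right _ _]
  have dissipation := coercive E (J ∘ stage A P w)
  simp only [Function.comp_apply] at dissipation
  refine pow_le_pow_iff_left₀ (norm_nonneg _) (norm_nonneg _) two_ne_zero |>.mp ?_
  linarith [bound V E A P J δ H w]

theorem exists_forall_norm_sdaStep_pow_le {k : ℕ} (hk : 2 ≤ k) (hev : Even k) :
    ∃ δ₀ > 0, ∀ (V : Type u) (E : Type v) [NormedAddCommGroup V] [InnerProductSpace ℝ V]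
      [SeminormedAddCommGroup E] [InnerProductSpace ℝ E] (A P : V →ₗ[ℝ] V) (J : V →ₗ[ℝ] E) (δ : ℝ),
      SdaBounds A P J δ → δ ≤ δ₀ →
      ∀ m, 2 ≤ m → ∀ w, ‖(sdaStep A P (2 * k) ^ m) w‖ ≤ ‖w‖ := by
  obtain ⟨δ₂, hδ₂, two⟩ := exists_norm_sdaStep_pow_le.{u, v} hk hev le_rfl
  obtain ⟨δ₃, hδ₃, three⟩ := exists_norm_sdaStep_pow_le.{u, v} hk hev (by omega : 2 ≤ 3)
  refine ⟨min δ₂ δ₃, lt_min hδ₂ hδ₃, fun V E _ _ _ _ A P J δ H hδ m hm w => ?_⟩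
  simp only [Module.End.pow_apply] at two three ⊢
  exact iterate_le_of_two_three (g := norm) (two V E A P J δ H (hδ.trans (min_le_left _ _)))
    (three V E A P J δ H (hδ.trans (min_le_right _ _))) hm w

end SdaStability

section Jump

lemma exists_linearMap_inner_eq {V : Type u} [AddCommGroup V] [Module ℝ V]
    {B : LinearMap.BilinForm ℝ V} (hB : B.IsPosSemidef) :
    ∃ (E : Type u) (_ : SeminormedAddCommGroup E) (_ : InnerProductSpace ℝ E) (J : V →ₗ[ℝ] E),
      ∀ x y, ⟪J x, J y⟫ = B x y := by
  let core : PreInnerProductSpace.Core ℝ V :=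
    { inner := fun x y => B x y
      conj_inner_symm := fun x y => hB.isSymm.eq y x
      re_inner_nonneg := hB.isNonneg.nonneg
      add_left := fun x y z => by simp
      smul_left := fun x y r => by simp }
  let := InnerProductSpace.Core.toSeminormedAddCommGroup (c := core)
  exact ⟨V, inferInstance, InnerProductSpace.ofCore core, LinearMap.id, fun _ _ => rfl⟩

variable {V : Type u} [NormedAddCommGroup V] [InnerProductSpace ℝ V]

lemma exists_jumpMap {L Lstar : V →ₗ[ℝ] V} (hadj : ∀ w v, ⟪L w, v⟫ = ⟪w, Lstar v⟫)
    (hneg : ∀ v, ⟪(L + Lstar) v, v⟫ ≤ 0) :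
    ∃ (E : Type u) (_ : SeminormedAddCommGroup E) (_ : InnerProductSpace ℝ E) (J : V →ₗ[ℝ] E),
      (∀ x y, ⟪J x, J y⟫ = -(⟪L x, y⟫ + ⟪x, L y⟫)) ∧ ∀ v, ‖J v‖ = jumpSN L Lstar v := by
  have hcomm (x y : V) : ⟪Lstar x, y⟫ = ⟪x, L y⟫ := by
    rw [real_inner_comm, ← hadj, real_inner_comm]
  have form (x y : V) : -⟪(L + Lstar) x, y⟫ = -(⟪L x, y⟫ + ⟪x, L y⟫) := by
    rw [LinearMap.add_apply, inner_add_left, hcomm]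
  have symm (x y : V) : -⟪(L + Lstar) x, y⟫ = -⟪(L + Lstar) y, x⟫ := by
    rw [form, form, add_comm, real_inner_comm, real_inner_comm y]
  obtain ⟨E, _, _, J, hJ⟩ := exists_linearMap_inner_eq (B := -(innerₗ V) ∘ₗ (L + Lstar))
    ⟨⟨symm⟩, ⟨fun v => neg_nonneg.mpr (hneg v)⟩⟩
  refine ⟨E, _, _, J, fun x y => (hJ x y).trans (form x y), fun v => ?_⟩
  rw [norm_eq_sqrt_real_inner, hJ, jumpSN]
  rfl

end Jump

section Main

lemma SdaBounds.of_timeStep {V E : Type*} [NormedAddCommGroup V] [InnerProductSpace ℝ V]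
    [SeminormedAddCommGroup E] [InnerProductSpace ℝ E] {L P : V →ₗ[ℝ] V} {J : V →ₗ[ℝ] E}
    {h τ c : ℝ} (hh : 0 ≤ h) (hτ : 0 ≤ τ) (hc : 1 ≤ c) (hcfl : c * √(τ / h) ≤ 1)
    (jump : ∀ x y, ⟪J x, J y⟫ = -(⟪L x, y⟫ + ⟪x, L y⟫)) (proj : P.IsSymmetricProjection)
    (norm_proj_le : ∀ x, ‖P (L x)‖ ≤ c * h ^ (-(1 / 2) : ℝ) * ‖J x‖)
    (norm_jump_le : ∀ x, ‖J x‖ ≤ c * h ^ (-(1 / 2) : ℝ) * ‖x‖)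
    (norm_le : ∀ x, ‖L x‖ ≤ c * h⁻¹ * ‖x‖) :
    SdaBounds (τ • L) P (√τ • J) (c * √(τ / h)) := by
  have sq_le : τ / h ≤ √(τ / h) := by
    have : √(τ / h) ≤ 1 := (le_mul_of_one_le_left (Real.sqrt_nonneg _) hc).trans hcfl
    exact (Real.mul_self_sqrt (by positivity)).symm.trans_le
      (mul_le_of_le_one_left (Real.sqrt_nonneg _) this)
  rw [Real.rpow_neg hh, ← Real.sqrt_eq_rpow] at norm_proj_le norm_jump_le
  refine ⟨by positivity, hcfl, fun x y => ?_, proj, fun x => ?_, fun x => ?_, fun x => ?_⟩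
  · simp only [LinearMap.smul_apply, inner_smul_left, inner_smul_right, conj_trivial, jump]
    linear_combination (-(⟪L x, y⟫ + ⟪x, L y⟫)) * Real.mul_self_sqrt hτ
  · rw [LinearMap.smul_apply, map_smul, norm_smul, Real.norm_of_nonneg hτ, LinearMap.smul_apply,
      norm_smul, Real.norm_of_nonneg (Real.sqrt_nonneg τ), Real.sqrt_div hτ]
    refine (mul_le_mul_of_nonneg_left (norm_proj_le x) hτ).trans_eq ?_
    linear_combination (-(c * (√h)⁻¹ * ‖J x‖)) * Real.mul_self_sqrt hτ
  · rw [LinearMap.smul_apply, norm_smul, Real.norm_of_nonneg (Real.sqrt_nonneg τ),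
      Real.sqrt_div hτ]
    refine (mul_le_mul_of_nonneg_left (norm_jump_le x) (Real.sqrt_nonneg τ)).trans_eq (by ring)
  · rw [LinearMap.smul_apply, norm_smul, Real.norm_of_nonneg hτ]
    calc τ * ‖L x‖ ≤ τ * (c * h⁻¹ * ‖x‖) := mul_le_mul_of_nonneg_left (norm_le x) hτ
      _ = c * (τ / h) * ‖x‖ := by ring
      _ ≤ c * √(τ / h) * ‖x‖ := by gcongr

theorem sdA_rk_strong_two_stability_mod_zero_general (r : ℕ) (hr : 4 ≤ r) (hmod : r % 4 = 0) :
    ∀ c₁ c₂ c₃ : ℝ, ∃ lam₀ > (0 : ℝ),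
      ∀ (V : Type u) [NormedAddCommGroup V] [InnerProductSpace ℝ V] (L Lstar P : V →ₗ[ℝ] V),
        (∀ w v : V, ⟪L w, v⟫ = ⟪w, Lstar v⟫) →
        (∀ v : V, ⟪(L + Lstar) v, v⟫ ≤ 0) →
        P.IsSymmetricProjection →
        ∀ h τ : ℝ, 0 < h → 0 < τ → τ / h ≤ lam₀ →
        (∀ w : V, ‖P (L w)‖ ≤ c₁ * h ^ (-(1 / 2) : ℝ) * jumpSN L Lstar w) →
        (∀ v : V, jumpSN L Lstar v ≤ c₂ * h ^ (-(1 / 2) : ℝ) * ‖v‖) →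
        (∀ v : V, ‖L v‖ ≤ c₃ * h⁻¹ * ‖v‖) →
        ∀ m : ℕ, 2 ≤ m → ∀ w : V,
          ‖(((1 : V →ₗ[ℝ] V)
              + τ • (L * ∑ i ∈ Finset.Icc 1 r,
                  (1 / (i.factorial : ℝ)) • (τ • (((1 : V →ₗ[ℝ] V) - P) * L)) ^ (i - 1))) ^ m) w‖
            ≤ ‖w‖ := by
  intro c₁ c₂ c₃
  obtain ⟨k, rfl⟩ : ∃ k, r = 2 * (2 * k) := ⟨r / 4, by omega⟩
  obtain ⟨δ₀, hδ₀, stable⟩ :=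
    exists_forall_norm_sdaStep_pow_le.{u, u} (by omega : 2 ≤ 2 * k) (even_two_mul k)
  set c := max 1 (max c₁ (max c₂ c₃))
  have hc : 1 ≤ c := le_max_left _ _
  refine ⟨(min 1 δ₀ / c) ^ 2, by positivity, fun V _ _ L Lstar P hadj hneg hP h τ hh hτ hcfl
    hPL hjump hL m hm w => ?_⟩
  obtain ⟨E, _, _, J, hJ, norm_J⟩ := exists_jumpMap hadj hneg
  simp only [← norm_J] at hPL hjump
  have small : c * √(τ / h) ≤ min 1 δ₀ :=
    (le_div_iff₀' (by positivity)).mp (Real.sqrt_le_iff.mpr ⟨by positivity, hcfl⟩)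
  rw [← sdaStep_smul]
  refine stable V E (τ • L) P (√τ • J) _ (.of_timeStep hh.le hτ.le hc
    (small.trans (min_le_left _ _)) hJ hP (fun x => (hPL x).trans ?_)
    (fun x => (hjump x).trans ?_) fun x => (hL x).trans ?_) (small.trans (min_le_right _ _)) m hm w
  all_goals
    gcongr
    simp [c]

end Main

/-- Strong(2) stability of the sdA-RKrDGk scheme for `r ≡ 0 (mod 4)`
(Theorem 3.9): with `L̃ = (I - P)L` and
`R̃ = I + τL ∑_{i=1}^r (1/i!)(τL̃)^{i-1}`, for `λ = τ/h ≤ λ₀` one has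
`‖R̃^m w‖ ≤ ‖w‖` for all `m ≥ 2`. -/
theorem sdA_rk_strong_two_stability_mod_zero (r : ℕ) (hr : 4 ≤ r) (hmod : r % 4 = 0) :
    ∀ c₁ c₂ c₃ : ℝ, 0 < c₁ → 0 < c₂ → 0 < c₃ →
    ∃ lam₀ > (0 : ℝ),
      ∀ (V : Type) [NormedAddCommGroup V] [InnerProductSpace ℝ V] [FiniteDimensional ℝ V],
      ∀ L Lstar P : V →ₗ[ℝ] V,
        (∀ w v : V, ⟪L w, v⟫ = ⟪w, Lstar v⟫) →
        (∀ v : V, ⟪(L + Lstar) v, v⟫ ≤ 0) →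
        (∀ w v : V, ⟪P w, v⟫ = ⟪w, P v⟫) →
        (∀ v : V, P (P v) = P v) →
        ∀ h τ : ℝ, 0 < h → 0 < τ → τ / h ≤ lam₀ →
        (∀ w : V, ‖P (L w)‖ ≤ c₁ * h ^ (-(1 / 2) : ℝ) * jumpSN L Lstar w) →
        (∀ w : V, ‖P (Lstar w)‖ ≤ c₁ * h ^ (-(1 / 2) : ℝ) * jumpSN L Lstar w) →
        (∀ v : V, jumpSN L Lstar v ≤ c₂ * h ^ (-(1 / 2) : ℝ) * ‖v‖) →
        (∀ v : V, ‖L v‖ ≤ c₃ * h⁻¹ * ‖v‖) →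
        ∀ m : ℕ, 2 ≤ m →
        ∀ w : V,
          ‖(((1 : V →ₗ[ℝ] V)
              + τ • (L * ∑ i ∈ Finset.Icc 1 r,
                  (1 / (i.factorial : ℝ)) • (τ • (((1 : V →ₗ[ℝ] V) - P) * L)) ^ (i - 1))) ^ m) w‖
            ≤ ‖w‖ := by
  intro c₁ c₂ c₃ _ _ _
  obtain ⟨lam₀, hlam₀, stable⟩ :=
    sdA_rk_strong_two_stability_mod_zero_general.{0} r hr hmod c₁ c₂ c₃
  exact ⟨lam₀, hlam₀, fun V _ _ _ L Lstar P hadj hneg hsymm hidem h τ hh hτ hcfl hPL _ hjump hL =>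
    stable V L Lstar P hadj hneg ⟨LinearMap.ext hidem, hsymm⟩ h τ hh hτ hcfl hPL hjump hL⟩
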